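/- Let ω₁, ω₂ ∈ ℂ be linearly independent over ℝ and L = ℤω₁ + ℤω₂ the lattice they generate, ℘ the associated Weierstrass function and g₂, g₃ its invariants. Then for every z ∈ ℂ with z ∉ L, the derivative of ℘ satisfies ℘'(z)² = 4℘(z)³ − g₂℘(z) − g₃. -/

import Mathlib

/-- The Weierstrass `℘`-function of the lattice `L = ℤω₁ + ℤω₂`:
`℘(z) = 1/z² + ∑_{ω ∈ L, ω ≠ 0} (1/(z−ω)² − 1/ω²)`. -/
noncomputable def weierstrassP (ω₁ ω₂ : ℂ) (z : ℂ) : ℂ :=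
  1 / z ^ 2 + ∑' p : {q : ℤ × ℤ // q ≠ 0},
    (1 / (z - ((p.1.1 : ℂ) * ω₁ + (p.1.2 : ℂ) * ω₂)) ^ 2 -
      1 / ((p.1.1 : ℂ) * ω₁ + (p.1.2 : ℂ) * ω₂) ^ 2)

/-- The first lattice invariant `g₂ = 60 ∑_{ω ∈ L, ω ≠ 0} ω⁻⁴`. -/
noncomputable def latticeG₂ (ω₁ ω₂ : ℂ) : ℂ :=
  60 * ∑' p : {q : ℤ × ℤ // q ≠ 0},
    1 / ((p.1.1 : ℂ) * ω₁ + (p.1.2 : ℂ) * ω₂) ^ 4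

/-- The second lattice invariant `g₃ = 140 ∑_{ω ∈ L, ω ≠ 0} ω⁻⁶`. -/
noncomputable def latticeG₃ (ω₁ ω₂ : ℂ) : ℂ :=
  140 * ∑' p : {q : ℤ × ℤ // q ≠ 0},
    1 / ((p.1.1 : ℂ) * ω₁ + (p.1.2 : ℂ) * ω₂) ^ 6

theorem aux_split (f : ℤ × ℤ → ℂ) (hf : Summable f) :
    ∑' q, f q = f 0 + ∑' p : {q : ℤ × ℤ // q ≠ 0}, f p.1 := by
  have h := hf.sum_add_tsum_subtype_compl {0}
  rw [Finset.sum_singleton] at h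
  rw [← h]
  congr 1
  exact (Equiv.subtypeEquivRight (fun q => by simp)).tsum_eq
    (fun p : {q : ℤ × ℤ // q ≠ 0} => f p.1)

theorem aux_P (L : PeriodPair) (z : ℂ) :
    weierstrassP L.ω₁ L.ω₂ z = L.weierstrassP z := by
  have hs := (L.hasSum_weierstrassP z).summable
  have h1 := (L.latticeEquivProd.symm.toEquiv.summable_iff).mpr hs
  have h2 := aux_split _ h1
  rw [PeriodPair.weierstrassP, ← L.latticeEquivProd.symm.toEquiv.tsum_eq]
  simp only [Function.comp_def] at h2
  rw [h2, weierstrassP]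
  simp [PeriodPair.latticeEquiv_symm_apply]

theorem aux_G (L : PeriodPair) (n : ℕ) (hn : 2 < n) :
    ∑' p : {q : ℤ × ℤ // q ≠ 0},
    1 / ((p.1.1 : ℂ) * L.ω₁ + (p.1.2 : ℂ) * L.ω₂) ^ n = L.G n := by
  have hs := (L.hasSum_sumInvPow 0 hn).summable
  simp only [sub_zero] at hs
  have h1 := (L.latticeEquivProd.symm.toEquiv.summable_iff).mpr hs
  have h2 := aux_split _ h1
  rw [PeriodPair.G, ← L.latticeEquivProd.symm.toEquiv.tsum_eq]
  simp only [Function.comp_def] at h2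
  rw [h2]
  have : n ≠ 0 := by omega
  simp [PeriodPair.latticeEquiv_symm_apply, this]

/-- **The Weierstrass differential equation.**
If `ω₁, ω₂` are linearly independent over `ℝ` and `z` is not in the lattice
`L = ℤω₁ + ℤω₂`, then `℘'(z)² = 4 ℘(z)³ − g₂ ℘(z) − g₃`. -/
theorem weierstrassP_deriv_sq (ω₁ ω₂ : ℂ)
    (hind : LinearIndependent ℝ ![ω₁, ω₂]) (z : ℂ)
    (hz : ∀ m n : ℤ, z ≠ (m : ℂ) * ω₁ + (n : ℂ) * ω₂) :
    (deriv (weierstrassP ω₁ ω₂) z) ^ 2 =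
      4 * weierstrassP ω₁ ω₂ z ^ 3 - latticeG₂ ω₁ ω₂ * weierstrassP ω₁ ω₂ z -
        latticeG₃ ω₁ ω₂ := by
  let L : PeriodPair := ⟨ω₁, ω₂, hind⟩
  have hP : weierstrassP ω₁ ω₂ = L.weierstrassP := funext (aux_P L)
  have h4 : latticeG₂ ω₁ ω₂ = L.g₂ := by
    rw [latticeG₂, PeriodPair.g₂, ← aux_G L 4 (by norm_num)]
  have h6 : latticeG₃ ω₁ ω₂ = L.g₃ := by
    rw [latticeG₃, PeriodPair.g₃, ← aux_G L 6 (by norm_num)]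
  rw [hP, h4, h6, L.deriv_weierstrassP]
  refine L.derivWeierstrassP_sq z fun h => ?_
  obtain ⟨m, n, e⟩ := PeriodPair.mem_lattice.mp h
  exact hz m n e.symm
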